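/- For H a finitely generated free abelian group and M a finitely generated torsion submodule situation: if M_1 ⊗ Z[H] and M_2 ⊗ Z[H] are as in the setting of extension of scalars from Z[H_i] to Z[H] for H = H_1 ⊕ H_2, then the torsion submodule of the direct sum is the direct sum of torsion submodules, and hence ord_{Z[H]}(tor(⊕_i M_i ⊗ Z[H])) = Π_i ord_{Z[H_i]}(tor M_i). -/

import Mathlib

/-!
STATEMENT 3: For `H₁, H₂` finitely generated free abelian groups,
`H = H₁ ⊕ H₂`, and `M i` finitely generated `ℤ[H i]`-modules: the torsion
submodule of the direct sum `(M₁ ⊗ ℤ[H]) ⊕ (M₂ ⊗ ℤ[H])` is the direct sum of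
the torsion submodules, and hence
`ord_{ℤ[H]}(tor(⊕ᵢ M i ⊗ ℤ[H])) = Πᵢ ord_{ℤ[H i]}(tor M i)` (in `ℤ[H]`, up to
units; orders are rendered by the predicate `IsOrderOf`).
-/

open TensorProduct

/-- `d` is the zeroth order of the module `M` over `R`: a gcd of the maximal
minors of a finite presentation matrix of `M`. -/
def IsOrderOf (R : Type*) [CommRing R] (M : Type*) [AddCommGroup M] [Module R M]
    (d : R) : Prop :=
  ∃ (s r : ℕ) (_ : s ≤ r) (α : Matrix (Fin s) (Fin r) R)
    (p : (Fin s → R) →ₗ[R] M),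
      Function.Surjective p ∧
      LinearMap.ker p = LinearMap.range α.mulVecLin ∧
      (∀ c : Fin s → Fin r, d ∣ (α.submatrix id c).det) ∧
      (∀ e : R, (∀ c : Fin s → Fin r, e ∣ (α.submatrix id c).det) → e ∣ d)

noncomputable section

variable (n₁ n₂ : ℕ)

/-- `ℤ[H₁]`, `H₁ = ℤ^{n₁}`. -/
abbrev R1 : Type := AddMonoidAlgebra ℤ (Fin n₁ → ℤ)

/-- `ℤ[H₂]`, `H₂ = ℤ^{n₂}`. -/
abbrev R2 : Type := AddMonoidAlgebra ℤ (Fin n₂ → ℤ)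

/-- `ℤ[H]`, `H = H₁ ⊕ H₂`. -/
abbrev RH : Type := AddMonoidAlgebra ℤ ((Fin n₁ → ℤ) × (Fin n₂ → ℤ))

instance : Algebra (R1 n₁) (RH n₁ n₂) :=
  (AddMonoidAlgebra.mapDomainRingHom ℤ
    (AddMonoidHom.inl (Fin n₁ → ℤ) (Fin n₂ → ℤ))).toAlgebra

instance : Algebra (R2 n₂) (RH n₁ n₂) :=
  (AddMonoidAlgebra.mapDomainRingHom ℤ
    (AddMonoidHom.inr (Fin n₁ → ℤ) (Fin n₂ → ℤ))).toAlgebra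

/-!
The group ring `ℤ[H]` is flat over each `ℤ[Hᵢ]`, and all three are Laurent polynomial rings over
`ℤ`, hence unique factorization domains. Flat base change commutes with torsion submodules, because
`M` modulo torsion embeds in a vector space over the fraction field, and with greatest common
divisors, because these are detected by colon ideals. A direct sum is presented by a block diagonal
matrix, whose nonzero maximal minors are, up to sign, the products of maximal minors of the blocks;
in a domain with gcds, the gcd of all these products is the product of the gcds.
-/

section GCD

variable {α ι κ : Type*} [CommMonoidWithZero α]

/-- `d` is a greatest common divisor of the family `f`, possibly infinite. It is encoded by its
universal property: the divisors of `d` are the common divisors of `f`. -/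
def IsGCD (f : ι → α) (d : α) : Prop :=
  ∀ e, (∀ i, e ∣ f i) ↔ e ∣ d

theorem IsGCD.const_mul [IsGCDMonoid α] {f : ι → α} {d : α} (h : IsGCD f d) (x : α) :
    IsGCD (fun i ↦ x * f i) (x * d) := by
  intro e
  refine ⟨fun he ↦ ?_, fun he i ↦ he.trans (mul_dvd_mul_left x ((h d).2 dvd_rfl i))⟩
  obtain rfl | hx := eq_or_ne x 0
  · simp
  obtain ⟨_⟩ := ‹IsGCDMonoid α›
  obtain ⟨k, hk⟩ := dvd_lcm_left x e
  have hkd : k ∣ d := (h k).1 fun i ↦ by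
    rw [← mul_dvd_mul_iff_left hx, ← hk]
    exact lcm_dvd (dvd_mul_right x _) (he i)
  calc e ∣ lcm x e := dvd_lcm_right x e
    _ = x * k := hk
    _ ∣ x * d := mul_dvd_mul_left x hkd

theorem IsGCD.mul [IsGCDMonoid α] {f : ι → α} {g : κ → α} {a b : α} (ha : IsGCD f a)
    (hb : IsGCD g b) : IsGCD (fun p : ι × κ ↦ f p.1 * g p.2) (a * b) := by
  intro e
  calc (∀ p : ι × κ, e ∣ f p.1 * g p.2) ↔ ∀ i, ∀ j, e ∣ f i * g j := Prod.forall
    _ ↔ ∀ i, e ∣ b * f i := forall_congr' fun i ↦ by rw [hb.const_mul (f i) e, mul_comm]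
    _ ↔ e ∣ a * b := by rw [ha.const_mul b e, mul_comm]

end GCD

section Flat

variable {R S M ι : Type*} [CommRing R] [CommRing S] [Algebra R S] [AddCommGroup M] [Module R M]

-- Flat base change preserves the inclusion of colon ideals `⋂ i, (a : m i) ≤ (a : d)`: the vector
-- `y` and the quotients `z i` solve a linear system over `R`, and by the equational criterion for
-- flatness every such solution is a combination of solutions in `R`.
theorem exists_smul_eq_smul_of_flat [Module.Flat R M] [Finite ι] {m : ι → R} {a d : R}
    (h : ∀ x, (∀ i, a ∣ m i * x) → a ∣ d * x) {y : M} (hy : ∀ i, ∃ z : M, m i • y = a • z) :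
    ∃ z : M, d • y = a • z := by
  classical
  cases nonempty_fintype ι
  choose z hz using hy
  let relations : (ι → R) →ₗ[R] R × (ι → R) :=
    (Fintype.linearCombination R m).prod (-(a • LinearMap.id))
  let solution : R × (ι → R) →ₗ[R] M :=
    (LinearMap.toSpanSingleton R M y).coprod (Fintype.linearCombination R z)
  have hsol : solution ∘ₗ relations = 0 := by
    ext i
    simp [solution, relations, hz]
  obtain ⟨k, A, Y, hY, hA⟩ := Module.Flat.exists_factorization_of_comp_eq_zero_of_free hsol
  have hA' (i : ι) : m i • A (1, 0) = a • A (0, Pi.single i 1) := by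
    have hrel : relations (Pi.single i 1) = m i • (1, 0) - a • (0, Pi.single i 1) := by
      simp [relations]
    rw [← sub_eq_zero, ← map_smul, ← map_smul, ← map_sub, ← hrel]
    exact LinearMap.congr_fun hA _
  have hdvd (j : Fin k) : a ∣ d * A (1, 0) j :=
    h _ fun i ↦ ⟨A (0, Pi.single i 1) j, by simpa using DFunLike.congr_fun (hA' i) j⟩
  choose v hv using hdvd
  refine ⟨Y (Finsupp.equivFunOnFinite.symm v), ?_⟩
  have hdA : d • A (1, 0) = a • Finsupp.equivFunOnFinite.symm v := by
    ext j
    simpa using hv j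
  have hyA : y = Y (A (1, 0)) := by
    simpa [solution] using LinearMap.congr_fun hY (1, 0)
  rw [hyA, ← map_smul, hdA, map_smul]

theorem IsGCD.algebraMap_of_flat [IsGCDMonoid R] [Module.Flat R S] [Finite ι] {m : ι → R} {d : R}
    (h : IsGCD m d) : IsGCD (fun i ↦ algebraMap R S (m i)) (algebraMap R S d) := by
  intro e
  refine ⟨fun he ↦ ?_, fun he i ↦ he.trans (map_dvd _ ((h d).2 dvd_rfl i))⟩
  by_cases h0 : ∀ i, m i = 0
  · have hd : d = 0 := zero_dvd_iff.1 ((h 0).1 fun i ↦ by rw [h0 i])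
    simp [hd]
  obtain ⟨i₀, hi₀⟩ := not_forall.1 h0
  -- The quotients `g i = m i / e` satisfy `m i * g i₀ = m i₀ * g i`. The lemma above transfers this
  -- to `d * g i₀ = m i₀ * z`, and then `z = d / e`.
  choose g hg using he
  dsimp only at hg
  have hdg : ∃ z, d • g i₀ = m i₀ • z := by
    refine exists_smul_eq_smul_of_flat (m := m) (fun x hx ↦ ?_) fun i ↦ ⟨g i, ?_⟩
    · rw [mul_comm]
      exact (h.const_mul x _).1 fun i ↦ by simpa only [mul_comm] using hx i
    · rw [Algebra.smul_def, Algebra.smul_def, hg, hg]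
      ring
  obtain ⟨z, hz⟩ := hdg
  have := IsGCDMonoid.isCancelMulZero (α := R)
  have hreg : IsSMulRegular S (m i₀) :=
    Module.Flat.isSMulRegular_of_nonZeroDivisors (mem_nonZeroDivisors_of_ne_zero hi₀)
  refine ⟨z, hreg ?_⟩
  simp only [Algebra.smul_def] at hz ⊢
  linear_combination e * hz + algebraMap R S d * hg i₀

theorem algebraMap_mem_nonZeroDivisors_of_flat [Module.Flat R S] {a : R}
    (ha : a ∈ nonZeroDivisors R) : algebraMap R S a ∈ nonZeroDivisors S :=
  isRegular_iff_mem_nonZeroDivisors.1 <| isLeftRegular_iff_isRegular.1 <|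
    ((isSMulRegular_algebraMap_iff S).2 <|
      Module.Flat.isSMulRegular_of_nonZeroDivisors ha).isLeftRegular

variable [IsDomain R] [Module.Flat R S]

theorem isTorsionFree_tensorProduct_of_flat [Module.IsTorsionFree R M] :
    Module.IsTorsionFree S (S ⊗[R] M) := by
  -- `M` embeds in the vector space `K ⊗ M`, whose base change to `S` is flat.
  let K := FractionRing R
  let j : M →ₗ[R] K ⊗[R] M := TensorProduct.mk R K M 1
  have hj : Function.Injective j :=
    (IsLocalizedModule.injective_iff_isRegular (S := nonZeroDivisors R) j).2 fun c ↦
      (isRegular_iff_mem_nonZeroDivisors.2 c.2).isSMulRegular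
  have : Module.Flat R (K ⊗[R] M) := Module.Flat.trans R K _
  exact Function.Injective.moduleIsTorsionFree (j.baseChange S)
    (Module.Flat.lTensor_preserves_injective_linearMap j hj) (map_smul _)

theorem torsion_tensorProduct_of_flat :
    Submodule.torsion S (S ⊗[R] M) = (Submodule.torsion R M).baseChange S := by
  let T := Submodule.torsion R M
  apply le_antisymm
  · rintro x ⟨a, ha⟩
    have := isTorsionFree_tensorProduct_of_flat (R := R) (S := S) (M := M ⧸ T)
    have hx : T.mkQ.baseChange S x = 0 := by
      apply (isRegular_iff_mem_nonZeroDivisors.2 a.2).isSMulRegular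
      dsimp only
      rw [smul_zero, ← map_smul]
      exact (congrArg _ ha).trans (map_zero _)
    exact (lTensor_exact S (LinearMap.exact_subtype_mkQ T) T.mkQ_surjective x).1 hx
  · rw [Submodule.baseChange_eq_span, Submodule.span_le]
    rintro _ ⟨m, ⟨a, ha : (a : R) • m = 0⟩, rfl⟩
    refine ⟨⟨_, algebraMap_mem_nonZeroDivisors_of_flat a.2⟩, ?_⟩
    simp [← TensorProduct.tmul_smul, ha]

end Flat

theorem torsion_prod {R M N : Type*} [CommSemiring R] [AddCommMonoid M] [Module R M]
    [AddCommMonoid N] [Module R N] :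
    Submodule.torsion R (M × N) = (Submodule.torsion R M).prod (Submodule.torsion R N) := by
  ext ⟨x, y⟩
  constructor
  · rintro ⟨a, ha⟩
    exact ⟨⟨a, congrArg Prod.fst ha⟩, ⟨a, congrArg Prod.snd ha⟩⟩
  · rintro ⟨⟨a, ha : a • x = 0⟩, ⟨b, hb : b • y = 0⟩⟩
    refine ⟨a * b, Prod.ext ?_ ?_⟩
    · change (a * b) • x = 0
      rw [mul_comm, mul_smul, ha, smul_zero]
    · change (a * b) • y = 0
      rw [mul_smul, hb, smul_zero]

/-- The torsion submodule of a product, as the product of the torsion submodules. -/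
def torsionProdEquiv (R M N : Type*) [CommSemiring R] [AddCommMonoid M] [Module R M]
    [AddCommMonoid N] [Module R N] :
    Submodule.torsion R (M × N) ≃ₗ[R] Submodule.torsion R M × Submodule.torsion R N where
  toFun x := (⟨x.1.1, (torsion_prod.le x.2).1⟩, ⟨x.1.2, (torsion_prod.le x.2).2⟩)
  invFun x := ⟨(x.1, x.2), torsion_prod.ge ⟨x.1.2, x.2.2⟩⟩
  map_add' _ _ := rfl
  map_smul' _ _ := rfl
  left_inv _ := rfl
  right_inv _ := rfl

section Minors

variable {R S m n m' n' : Type*} [CommRing R] [CommRing S] [Fintype m'] [DecidableEq m'] [Fintype m]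
  [DecidableEq m]

/-- The minor of `A` on all rows and on the columns selected by `c`. Columns may be repeated, in
which case the minor vanishes. -/
def maximalMinor (A : Matrix m n R) (c : m → n) : R :=
  (A.submatrix id c).det

theorem maximalMinor_map (f : R →+* S) (A : Matrix m n R) (c : m → n) :
    maximalMinor (A.map f) c = f (maximalMinor A c) := by
  rw [maximalMinor, maximalMinor, RingHom.map_det]
  rfl

theorem maximalMinor_reindex (e : m ≃ m') (f : n ≃ n') (A : Matrix m n R) (c : m → n) :
    maximalMinor (A.reindex e f) (f ∘ c ∘ e.symm) = maximalMinor A c := by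
  rw [maximalMinor, maximalMinor, ← Matrix.det_submatrix_equiv_self e.symm (A.submatrix id c)]
  congr 1
  ext i j
  simp

theorem maximalMinor_fromBlocks_sumMap (A : Matrix m n R) (B : Matrix m' n' R) (c : m → n)
    (c' : m' → n') :
    maximalMinor (Matrix.fromBlocks A 0 0 B) (Sum.map c c') =
      maximalMinor A c * maximalMinor B c' := by
  rw [maximalMinor, maximalMinor, maximalMinor, ← Matrix.det_fromBlocks_zero₂₁ _ 0]
  congr 1
  ext (i | i) (j | j) <;> rfl

theorem associated_maximalMinor_comp_perm (A : Matrix m n R) (c : m → n) (σ : Equiv.Perm m) :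
    Associated (maximalMinor A c) (maximalMinor A (c ∘ σ)) := by
  have hσ : maximalMinor A (c ∘ σ) = Equiv.Perm.sign σ * maximalMinor A c :=
    Matrix.det_permute' σ (A.submatrix id c)
  exact hσ ▸ associated_unit_mul_right _ _ ((Equiv.Perm.sign σ).isUnit.map (Int.castRingHom R))

theorem exists_comp_perm_eq_sumMap {A : Matrix m n R} {B : Matrix m' n' R} {c : m ⊕ m' → n ⊕ n'}
    (h : maximalMinor (Matrix.fromBlocks A 0 0 B) c ≠ 0) :
    ∃ (σ : Equiv.Perm (m ⊕ m')) (c₁ : m → n) (c₂ : m' → n'), c ∘ σ = Sum.map c₁ c₂ := by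
  -- The columns of a nonzero term of the Leibniz expansion respect the blocks.
  obtain ⟨σ, -, hσ⟩ := Finset.exists_ne_zero_of_sum_ne_zero ((Matrix.det_apply _).symm.trans_ne h)
  have hentry (i : m ⊕ m') : Matrix.fromBlocks A 0 0 B i (c (σ.symm i)) ≠ 0 := fun hi ↦
    hσ <| by
      rw [Finset.prod_eq_zero (Finset.mem_univ (σ.symm i)) (by simpa using hi), smul_zero]
  have hl (i : m) : ∃ k, c (σ.symm (.inl i)) = .inl k := by
    rcases hk : c (σ.symm (.inl i)) with k | k
    · exact ⟨k, rfl⟩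
    · exact absurd (by simp [hk]) (hentry (.inl i))
  have hr (i : m') : ∃ k, c (σ.symm (.inr i)) = .inr k := by
    rcases hk : c (σ.symm (.inr i)) with k | k
    · exact absurd (by simp [hk]) (hentry (.inr i))
    · exact ⟨k, rfl⟩
  choose c₁ hc₁ using hl
  choose c₂ hc₂ using hr
  exact ⟨σ.symm, c₁, c₂, funext <| Sum.rec hc₁ hc₂⟩

theorem IsGCD.maximalMinor_fromBlocks [IsGCDMonoid R] {A : Matrix m n R} {B : Matrix m' n' R}
    {a b : R} (ha : IsGCD (maximalMinor A) a) (hb : IsGCD (maximalMinor B) b) :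
    IsGCD (maximalMinor (Matrix.fromBlocks A 0 0 B)) (a * b) := by
  intro e
  rw [← ha.mul hb e]
  constructor
  · rintro he ⟨c₁, c₂⟩
    simpa only [maximalMinor_fromBlocks_sumMap] using he (Sum.map c₁ c₂)
  · intro he c
    by_cases h : maximalMinor (Matrix.fromBlocks A 0 0 B) c = 0
    · simp [h]
    obtain ⟨σ, c₁, c₂, hc⟩ := exists_comp_perm_eq_sumMap h
    rw [(associated_maximalMinor_comp_perm _ c σ).dvd_iff_dvd_right, hc,
      maximalMinor_fromBlocks_sumMap]
    exact he (c₁, c₂)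

theorem IsGCD.maximalMinor_reindex {A : Matrix m n R} {d : R} (h : IsGCD (maximalMinor A) d)
    (e : m ≃ m') (f : n ≃ n') : IsGCD (maximalMinor (A.reindex e f)) d := by
  intro x
  rw [← h x, ← (e.arrowCongr f).forall_congr_right]
  exact forall_congr' fun c ↦ by rw [← _root_.maximalMinor_reindex e f A c]; rfl

end Minors

section Presentation

variable {R M N m n m' n' : Type*} [CommRing R] [AddCommGroup M] [Module R M]
  [AddCommGroup N] [Module R N] [Fintype n'] [Fintype n]

/-- `A` is a presentation matrix of `M`, with `p` sending the standard basis to the corresponding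
generators: the columns of `A` span the relations. -/
structure IsPresentation (A : Matrix m n R) (p : (m → R) →ₗ[R] M) : Prop where
  exact : Function.Exact A.mulVecLin p
  surjective : Function.Surjective p

namespace IsPresentation

variable {A : Matrix m n R} {p : (m → R) →ₗ[R] M}

theorem comp_linearEquiv (h : IsPresentation A p) (e : M ≃ₗ[R] N) :
    IsPresentation A (e.toLinearMap ∘ₗ p) where
  exact := h.exact.comp_injective _ e.injective (map_zero e)
  surjective := e.surjective.comp h.surjective

theorem reindex (h : IsPresentation A p) (e : m ≃ m') (f : n ≃ n') :
    IsPresentation (A.reindex e f) (p ∘ₗ LinearMap.funLeft R R e) where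
  exact := by
    refine .of_ladder_linearEquiv_of_exact (e₁ := .funCongrLeft R R f.symm)
      (e₂ := .funCongrLeft R R e.symm) (e₃ := .refl R M) ?_ ?_ h.exact
    · rw [Matrix.mulVecLin_reindex]
      ext
      simp [LinearMap.funLeft, Function.comp_assoc]
    · ext
      simp [LinearMap.funLeft, Function.comp_assoc]
  surjective := h.surjective.comp (LinearMap.funLeft_surjective_of_injective R R e e.injective)

theorem prod {B : Matrix m' n' R} {q : (m' → R) →ₗ[R] N} (hp : IsPresentation A p)
    (hq : IsPresentation B q) :
    IsPresentation (Matrix.fromBlocks A 0 0 B)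
      (p.prodMap q ∘ₗ (LinearEquiv.sumArrowLequivProdArrow m m' R R).toLinearMap) where
  exact := by
    have hprod : Function.Exact (A.mulVecLin.prodMap B.mulVecLin) (p.prodMap q) := by
      rw [LinearMap.exact_iff, LinearMap.ker_prodMap, LinearMap.range_prodMap,
        hp.exact.linearMap_ker_eq, hq.exact.linearMap_ker_eq]
    have hsplit (x : n ⊕ n' → R) : LinearEquiv.sumArrowLequivProdArrow n n' R R x =
        (x ∘ Sum.inl, x ∘ Sum.inr) := rfl
    refine (Function.Exact.iff_of_ladder_linearEquiv
      (e₁ := LinearEquiv.sumArrowLequivProdArrow n n' R R)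
      (e₂ := LinearEquiv.sumArrowLequivProdArrow m m' R R) (e₃ := .refl R (M × N)) ?_ rfl).1 hprod
    ext x i <;> simp [hsplit, Matrix.fromBlocks_mulVec]
  surjective := (hp.surjective.prodMap hq.surjective).comp (LinearEquiv.surjective _)

theorem baseChange [Fintype m] [DecidableEq m] (S : Type*) [CommRing S] [Algebra R S]
    (h : IsPresentation A p) :
    IsPresentation (A.map (algebraMap R S))
      (p.baseChange S ∘ₗ (TensorProduct.piScalarRight R S S m).symm.toLinearMap) where
  exact := by
    classical
    have hex : Function.Exact (A.mulVecLin.baseChange S) (p.baseChange S) :=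
      lTensor_exact S h.exact h.surjective
    refine .of_ladder_linearEquiv_of_exact (e₁ := TensorProduct.piScalarRight R S S n)
      (e₂ := TensorProduct.piScalarRight R S S m) (e₃ := .refl S (S ⊗[R] M)) ?_ ?_ hex
    · ext j i
      simp [Algebra.smul_def, Matrix.mulVec, dotProduct, Pi.single_apply]
    · ext i
      simp [-TensorProduct.piScalarRight_apply]
  surjective := (LinearMap.baseChange_surjective S h.surjective).comp (LinearEquiv.surjective _)

end IsPresentation

end Presentation

namespace IsOrderOf

variable {R M N m n : Type*} [CommRing R] [AddCommGroup M] [Module R M] [AddCommGroup N]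
  [Module R N] {d : R}

theorem of_isPresentation [Fintype m] [DecidableEq m] [Fintype n] {A : Matrix m n R}
    {p : (m → R) →ₗ[R] M} (hmn : Fintype.card m ≤ Fintype.card n) (hp : IsPresentation A p)
    (hd : IsGCD (maximalMinor A) d) : IsOrderOf R M d := by
  have hp' := hp.reindex (Fintype.equivFin m) (Fintype.equivFin n)
  have hd' := hd.maximalMinor_reindex (Fintype.equivFin m) (Fintype.equivFin n)
  exact ⟨_, _, hmn, _, _, hp'.surjective, hp'.exact.linearMap_ker_eq, (hd' d).2 dvd_rfl,
    fun e ↦ (hd' e).1⟩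

theorem exists_isPresentation (h : IsOrderOf R M d) :
    ∃ s r : ℕ, s ≤ r ∧ ∃ (A : Matrix (Fin s) (Fin r) R) (p : (Fin s → R) →ₗ[R] M),
      IsPresentation A p ∧ IsGCD (maximalMinor A) d := by
  obtain ⟨s, r, hsr, A, p, hp, hker, hdvd, hgreatest⟩ := h
  exact ⟨s, r, hsr, A, p, ⟨LinearMap.exact_iff.2 hker, hp⟩,
    fun e ↦ ⟨hgreatest e, fun he c ↦ he.trans (hdvd c)⟩⟩

theorem congr (h : IsOrderOf R M d) (e : M ≃ₗ[R] N) : IsOrderOf R N d := by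
  obtain ⟨s, r, hsr, A, p, hp, hd⟩ := h.exists_isPresentation
  exact of_isPresentation (by simpa) (hp.comp_linearEquiv e) hd

theorem prod [IsGCDMonoid R] {a b : R} (ha : IsOrderOf R M a) (hb : IsOrderOf R N b) :
    IsOrderOf R (M × N) (a * b) := by
  obtain ⟨s, r, hsr, A, p, hp, ha⟩ := ha.exists_isPresentation
  obtain ⟨s', r', hsr', B, q, hq, hb⟩ := hb.exists_isPresentation
  exact of_isPresentation (by simpa using add_le_add hsr hsr') (hp.prod hq)
    (ha.maximalMinor_fromBlocks hb)

variable (S : Type*) [CommRing S] [Algebra R S] [Module.Flat R S] [IsGCDMonoid R]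

theorem baseChange (h : IsOrderOf R M d) : IsOrderOf S (S ⊗[R] M) (algebraMap R S d) := by
  obtain ⟨s, r, hsr, A, p, hp, hd⟩ := h.exists_isPresentation
  refine of_isPresentation (by simpa) (hp.baseChange S) ?_
  rw [funext (maximalMinor_map (algebraMap R S) A)]
  exact hd.algebraMap_of_flat

theorem torsion_baseChange [IsDomain R] (h : IsOrderOf R (Submodule.torsion R M) d) :
    IsOrderOf S (Submodule.torsion S (S ⊗[R] M)) (algebraMap R S d) :=
  torsion_tensorProduct_of_flat (R := R) (S := S) (M := M) ▸
    (h.baseChange S).congr (Submodule.toBaseChange.toLinearEquiv S _)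

end IsOrderOf

theorem torsion_prod_and_order_mul_general {R₁ R₂ S M₁ M₂ : Type*} [CommRing R₁] [IsDomain R₁]
    [IsGCDMonoid R₁] [CommRing R₂] [IsDomain R₂] [IsGCDMonoid R₂] [CommRing S] [IsGCDMonoid S]
    [Algebra R₁ S] [Module.Flat R₁ S] [Algebra R₂ S] [Module.Flat R₂ S]
    [AddCommGroup M₁] [Module R₁ M₁] [AddCommGroup M₂] [Module R₂ M₂] :
    Submodule.torsion S ((S ⊗[R₁] M₁) × (S ⊗[R₂] M₂)) =
      (Submodule.torsion S (S ⊗[R₁] M₁)).prod (Submodule.torsion S (S ⊗[R₂] M₂)) ∧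
    ∀ d₁ d₂,
      IsOrderOf R₁ (Submodule.torsion R₁ M₁) d₁ →
      IsOrderOf R₂ (Submodule.torsion R₂ M₂) d₂ →
      IsOrderOf S (Submodule.torsion S ((S ⊗[R₁] M₁) × (S ⊗[R₂] M₂)))
        (algebraMap R₁ S d₁ * algebraMap R₂ S d₂) :=
  ⟨torsion_prod, fun _ _ h₁ h₂ ↦
    ((h₁.torsion_baseChange S).prod (h₂.torsion_baseChange S)).congr
      (torsionProdEquiv S _ _).symm⟩

section GroupAlgebra

variable (R : Type*) [CommRing R]

section Flat

variable (G H : Type*) [AddCommMonoid G] [AddCommMonoid H]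

theorem flat_mapDomainRingHom_inr :
    (AddMonoidAlgebra.mapDomainRingHom R (AddMonoidHom.inr G H)).Flat := by
  have hcurry : AddMonoidAlgebra.mapDomainRingHom R (AddMonoidHom.inr G H) =
      (AddMonoidAlgebra.curryRingEquiv (R := R) (M := G) (N := H)).symm.toRingHom.comp
        (algebraMap (AddMonoidAlgebra R H) (AddMonoidAlgebra (AddMonoidAlgebra R H) G)) := by
    ext <;> simp
  rw [hcurry]
  exact (RingHom.flat_algebraMap_iff.2 inferInstance).comp (.of_bijective (RingEquiv.bijective _))

theorem flat_mapDomainRingHom_inl :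
    (AddMonoidAlgebra.mapDomainRingHom R (AddMonoidHom.inl G H)).Flat := by
  let swap := (AddMonoidAlgebra.domCongr R R (AddEquiv.prodComm (M := H) (N := G))).toRingEquiv
  have hswap : AddMonoidAlgebra.mapDomainRingHom R (AddMonoidHom.inl G H) =
      swap.toRingHom.comp (AddMonoidAlgebra.mapDomainRingHom R (AddMonoidHom.inr H G)) := by
    ext <;> simp [swap]
  rw [hswap]
  exact (flat_mapDomainRingHom_inr R H G).comp (.of_bijective swap.bijective)

end Flat

variable [UniqueFactorizationMonoid R]

theorem uniqueFactorizationMonoid_laurentPolynomial :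
    UniqueFactorizationMonoid (LaurentPolynomial R) :=
  .of_isLocalization (M := Polynomial R) (Submonoid.powers Polynomial.X) _

theorem uniqueFactorizationMonoid_addMonoidAlgebra_fin (n : ℕ) :
    UniqueFactorizationMonoid (AddMonoidAlgebra R (Fin n → ℤ)) := by
  induction n with
  | zero =>
    exact (AddMonoidAlgebra.uniqueRingEquiv (R := R) (Fin 0 → ℤ)).symm.toMulEquiv
      |>.uniqueFactorizationMonoid ‹_›
  | succ n ih =>
    let consAddEquiv : ℤ × (Fin n → ℤ) ≃+ (Fin (n + 1) → ℤ) :=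
      (Fin.consLinearEquiv ℤ fun _ ↦ ℤ).toAddEquiv
    exact AddMonoidAlgebra.curryRingEquiv.symm.trans
      (AddMonoidAlgebra.domCongr R R consAddEquiv).toRingEquiv |>.toMulEquiv
      |>.uniqueFactorizationMonoid (uniqueFactorizationMonoid_laurentPolynomial _)

theorem uniqueFactorizationMonoid_addMonoidAlgebra (G : Type*) [AddCommGroup G] [Module.Free ℤ G]
    [Module.Finite ℤ G] : UniqueFactorizationMonoid (AddMonoidAlgebra R G) :=
  (AddMonoidAlgebra.domCongr R R
    (Module.finBasis ℤ G).equivFun.symm.toAddEquiv).toRingEquiv.toMulEquiv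
      |>.uniqueFactorizationMonoid (uniqueFactorizationMonoid_addMonoidAlgebra_fin R _)

end GroupAlgebra

theorem torsion_prod_and_order_mul
    (M₁ : Type*) [AddCommGroup M₁] [Module (R1 n₁) M₁] [Module.Finite (R1 n₁) M₁]
    (M₂ : Type*) [AddCommGroup M₂] [Module (R2 n₂) M₂] [Module.Finite (R2 n₂) M₂] :
    Submodule.torsion (RH n₁ n₂)
        (((RH n₁ n₂) ⊗[R1 n₁] M₁) × ((RH n₁ n₂) ⊗[R2 n₂] M₂)) =
      (Submodule.torsion (RH n₁ n₂) ((RH n₁ n₂) ⊗[R1 n₁] M₁)).prod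
        (Submodule.torsion (RH n₁ n₂) ((RH n₁ n₂) ⊗[R2 n₂] M₂)) ∧
    ∀ d₁ d₂,
      IsOrderOf (R1 n₁) (Submodule.torsion (R1 n₁) M₁) d₁ →
      IsOrderOf (R2 n₂) (Submodule.torsion (R2 n₂) M₂) d₂ →
      IsOrderOf (RH n₁ n₂)
        (Submodule.torsion (RH n₁ n₂)
          (((RH n₁ n₂) ⊗[R1 n₁] M₁) × ((RH n₁ n₂) ⊗[R2 n₂] M₂)))
        (algebraMap (R1 n₁) (RH n₁ n₂) d₁ * algebraMap (R2 n₂) (RH n₁ n₂) d₂) := by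
  have := uniqueFactorizationMonoid_addMonoidAlgebra ℤ
  have : Module.Flat (R1 n₁) (RH n₁ n₂) := flat_mapDomainRingHom_inl ℤ _ _
  have : Module.Flat (R2 n₂) (RH n₁ n₂) := flat_mapDomainRingHom_inr ℤ _ _
  exact torsion_prod_and_order_mul_general

end
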